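/- As n → ∞, Var(R_n)/n converges to 1/12, where R_n is the number of descents of a uniformly random derangement of S_n and Var(R_n) = (1/d_n) Σ_{π derangement of {1,…,n}} (des(π) − μ_n)², with μ_n the expected number of descents of a uniformly random derangement of S_n and d_n the number of derangements of {1,…,n}. -/

import Mathlib

open Finset

/-- The number of descents of a permutation of `Fin n`:
positions `i` with `i+1 < n` and `π(i) > π(i+1)`. -/
def descents {n : ℕ} (π : Equiv.Perm (Fin n)) : ℕ :=
  (Finset.univ.filter fun i : Fin n =>
    ∃ h : (i : ℕ) + 1 < n, π ⟨(i : ℕ) + 1, h⟩ < π i).card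

/-- The derangements of the symmetric group `S_n`. -/
def derangementSet (n : ℕ) : Finset (Equiv.Perm (Fin n)) :=
  Finset.univ.filter fun π => ∀ i, π i ≠ i

/-- Mean number of descents of a uniformly random derangement of `S_n`. -/
noncomputable def derMean (n : ℕ) : ℝ :=
  (∑ π ∈ derangementSet n, (descents π : ℝ)) / (derangementSet n).card

/-- Variance of the number of descents of a uniformly random derangement of `S_n`. -/
noncomputable def derVar (n : ℕ) : ℝ :=
  (∑ π ∈ derangementSet n, ((descents π : ℝ) - derMean n) ^ 2) / (derangementSet n).card

theorem dd_inv {α : Type*} [Fintype α] [DecidableEq α] (A : Finset (Equiv.Perm α)) (τ : Equiv.Perm α)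
    (h : ∀ π ∈ A, π * τ ∈ A) (f : Equiv.Perm α → ℝ) :
    ∑ π ∈ A, f (π * τ) = ∑ π ∈ A, f π := by
  have hinj : Set.InjOn (fun π : Equiv.Perm α => π * τ) A := by
    intro a _ b _ hab
    exact mul_right_cancel hab
  refine Finset.sum_nbij (fun π => π * τ) h hinj ?_ (fun _ _ => rfl)
  exact Finset.surjOn_of_injOn_of_card_le _ h hinj le_rfl

theorem dd_card1 {n : ℕ} (i a : Fin n) :
    n * (univ.filter fun π : Equiv.Perm (Fin n) => π i = a).card ≤ n.factorial := by
  have h : ((univ : Finset (Fin n)) ×ˢ (univ.filter fun π : Equiv.Perm (Fin n) => π i = a)).card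
      ≤ (univ : Finset (Equiv.Perm (Fin n))).card := by
    refine Finset.card_le_card_of_injOn (fun x => x.2 * Equiv.swap i x.1) (fun _ _ => by simp) ?_
    rintro ⟨k, π⟩ h1 ⟨l, ρ⟩ h2 h
    simp only [coe_product, coe_filter, Set.mem_prod, Set.mem_ofPred_eq, coe_univ, Set.mem_univ,
      true_and, mem_univ] at h1 h2 h
    have e1 : (π * Equiv.swap i k) k = a := by simp [h1]
    have e2 : (ρ * Equiv.swap i l) l = a := by simp [h2]
    rw [h] at e1
    have : k = l := (ρ * Equiv.swap i l).injective (e1.trans e2.symm)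
    subst this
    rw [mul_right_cancel h]
  rw [card_product] at h
  simpa [Fintype.card_perm] using h

theorem dd_card2 {n : ℕ} (i j a b : Fin n) (hij : i ≠ j) :
    (n * (n-1)) * (univ.filter fun π : Equiv.Perm (Fin n) => π i = a ∧ π j = b).card
      ≤ n.factorial := by
  have h : ((univ.erase i : Finset (Fin n)) ×ˢ
      (univ.filter fun π : Equiv.Perm (Fin n) => π i = a ∧ π j = b)).card
      ≤ (univ.filter fun π : Equiv.Perm (Fin n) => π i = a).card := by
    refine Finset.card_le_card_of_injOn (fun x => x.2 * Equiv.swap j x.1) ?_ ?_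
    · rintro ⟨k, π⟩ h1
      simp at h1 ⊢
      rw [Equiv.swap_apply_of_ne_of_ne hij (Ne.symm h1.1)]
      exact h1.2.1
    rintro ⟨k, π⟩ h1 ⟨l, ρ⟩ h2 h
    simp at h1 h2 h
    have e1 : (π * Equiv.swap j k) k = b := by simp [h1]
    have e2 : (ρ * Equiv.swap j l) l = b := by simp [h2]
    rw [h] at e1
    have : k = l := (ρ * Equiv.swap j l).injective (e1.trans e2.symm)
    subst this
    rw [mul_right_cancel h]
  rw [card_product] at h
  simp at h
  calc _ = n * ((n-1) * (univ.filter fun π : Equiv.Perm (Fin n) => π i = a ∧ π j = b).card) := by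
        ring
    _ ≤ _ := le_trans (Nat.mul_le_mul_left n h) (dd_card1 i a)

theorem dd_c1 {n : ℕ} (i a : Fin n) :
    ((univ.filter fun π : Equiv.Perm (Fin n) => π i = a).card : ℝ) ≤ n.factorial / n := by
  have hn : (0:ℝ) < n := by exact_mod_cast i.pos
  rw [le_div_iff₀ hn, mul_comm]
  exact_mod_cast dd_card1 i a

theorem dd_c2 {n : ℕ} (i j a b : Fin n) (hij : i ≠ j) :
    ((univ.filter fun π : Equiv.Perm (Fin n) => π i = a ∧ π j = b).card : ℝ)
      ≤ n.factorial / (n * (n - 1)) := by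
  have hn : 2 ≤ n := by
    by_contra h
    apply hij
    ext
    omega
  have hn' : (2:ℝ) ≤ n := by exact_mod_cast hn
  rw [le_div_iff₀ (by nlinarith), mul_comm]
  have := dd_card2 i j a b hij
  have h2 : ((n - 1 : ℕ) : ℝ) = n - 1 := by
    rw [Nat.cast_sub (by omega)]; simp
  rw [← h2]
  exact_mod_cast this

noncomputable def ddY {n : ℕ} (p q : Fin n) (π : Equiv.Perm (Fin n)) : ℝ :=
  if π q < π p then 1/2 else -1/2

theorem ddY_abs {n : ℕ} (p q : Fin n) (π : Equiv.Perm (Fin n)) : |ddY p q π| = 1/2 := by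
  unfold ddY; split_ifs <;> norm_num [abs_of_pos, abs_of_neg]

theorem ddY_sq {n : ℕ} (p q : Fin n) (π : Equiv.Perm (Fin n)) : ddY p q π * ddY p q π = 1/4 := by
  unfold ddY; split_ifs <;> norm_num

theorem ddY_symm {n : ℕ} (p q : Fin n) (h : p ≠ q) (π : Equiv.Perm (Fin n)) :
    ddY q p π = - ddY p q π := by
  have : π p ≠ π q := fun e => h (π.injective e)
  unfold ddY
  rcases lt_or_gt_of_ne this with h | h
  · rw [if_pos h, if_neg (not_lt.2 h.le)]; norm_num
  · rw [if_pos h, if_neg (not_lt.2 h.le)]; norm_num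

theorem ddY_swap {n : ℕ} (p q : Fin n) (h : p ≠ q) (π : Equiv.Perm (Fin n)) :
    ddY p q (π * Equiv.swap p q) = - ddY p q π := by
  rw [← ddY_symm p q h]
  simp [ddY]

theorem dd_bound {n : ℕ} (A : Finset (Equiv.Perm (Fin n))) (f : Equiv.Perm (Fin n) → ℝ) (c : ℝ)
    (h : ∀ π, |f π| ≤ c) : |∑ π ∈ A, f π| ≤ A.card * c := by
  refine (Finset.abs_sum_le_sum_abs _ _).trans ?_
  refine (Finset.sum_le_sum (fun π _ => h π)).trans ?_
  simp

theorem dd_mem {n : ℕ} {π : Equiv.Perm (Fin n)} : π ∈ derangementSet n ↔ ∀ i, π i ≠ i := by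
  simp [derangementSet]

/-- swapping keeps derangements on the good event -/
theorem dd_swap_mem {n : ℕ} (p q : Fin n) (π : Equiv.Perm (Fin n))
    (h : π ∈ derangementSet n) (h1 : π p ≠ q) (h2 : π q ≠ p) :
    π * Equiv.swap p q ∈ derangementSet n := by
  rw [dd_mem] at h ⊢
  intro i
  rw [Equiv.Perm.mul_apply]
  by_cases hp : i = p
  · subst hp; simpa using h2
  by_cases hq : i = q
  · subst hq; simpa using h1
  rw [Equiv.swap_apply_of_ne_of_ne hp hq]
  exact h i

theorem dd_zero {n : ℕ} (p q : Fin n) (hpq : p ≠ q) (P : Equiv.Perm (Fin n) → Prop)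
    [DecidablePred P] (f : Equiv.Perm (Fin n) → ℝ)
    (hP : ∀ π, P π → P (π * Equiv.swap p q))
    (hf : ∀ π, f (π * Equiv.swap p q) = - f π) :
    ∑ π ∈ (derangementSet n).filter (fun π => P π ∧ ¬ (π p = q ∨ π q = p)), f π = 0 := by
  have := dd_inv ((derangementSet n).filter (fun π => P π ∧ ¬ (π p = q ∨ π q = p)))
    (Equiv.swap p q) ?_ f
  · simp only [hf, Finset.sum_neg_distrib] at this
    linarith
  · intro π h
    rw [mem_filter, not_or] at h ⊢
    obtain ⟨h0, h1, h2, h3⟩ := h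
    refine ⟨dd_swap_mem p q π h0 h2 h3, hP π h1, ?_, ?_⟩
    · simp
      exact dd_mem.1 h0 q
    · simp
      exact dd_mem.1 h0 p

theorem dd_L1 {n : ℕ} (p q : Fin n) (hpq : p ≠ q) :
    |∑ π ∈ derangementSet n, ddY p q π| ≤ n.factorial / n := by
  classical
  have h0 := dd_zero p q hpq (fun _ => True) (ddY p q) (fun _ _ => trivial) (ddY_swap p q hpq)
  simp only [true_and] at h0
  rw [← Finset.sum_filter_add_sum_filter_not (derangementSet n) (fun π => π p = q ∨ π q = p), h0,
    add_zero]
  refine (dd_bound _ _ (1/2) (fun π => (ddY_abs p q π).le)).trans ?_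
  have : ((derangementSet n).filter (fun π => π p = q ∨ π q = p)).card
      ≤ (univ.filter fun π : Equiv.Perm (Fin n) => π p = q).card
        + (univ.filter fun π : Equiv.Perm (Fin n) => π q = p).card := by
    refine le_trans (Finset.card_le_card ?_) (Finset.card_union_le _ _)
    intro π h
    simp at h ⊢
    exact h.2
  have h' : (((derangementSet n).filter (fun π => π p = q ∨ π q = p)).card : ℝ)
      ≤ (univ.filter fun π : Equiv.Perm (Fin n) => π p = q).card
        + (univ.filter fun π : Equiv.Perm (Fin n) => π q = p).card := by exact_mod_cast this
  linarith [dd_c1 p q, dd_c1 q p]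

theorem dd_L2 {n : ℕ} (p q r s : Fin n) (hpq : p ≠ q) (hrs : r ≠ s) (hpr : p ≠ r) (hps : p ≠ s)
    (hqr : q ≠ r) (hqs : q ≠ s) :
    |∑ π ∈ derangementSet n, ddY p q π * ddY r s π| ≤ n.factorial / (n * (n - 1)) := by
  classical
  have h0 := dd_zero p q hpq (fun _ => True) (fun π => ddY p q π * ddY r s π)
    (fun _ _ => trivial) (by
      intro π
      simp only [ddY_swap p q hpq]
      have : ddY r s (π * Equiv.swap p q) = ddY r s π := by
        simp [ddY, Equiv.swap_apply_of_ne_of_ne hpr.symm hqr.symm,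
          Equiv.swap_apply_of_ne_of_ne hps.symm hqs.symm]
      rw [this]; ring)
  have h1 := dd_zero r s hrs (fun π => π p = q ∨ π q = p) (fun π => ddY p q π * ddY r s π)
    (by
      intro π
      simp [Equiv.swap_apply_of_ne_of_ne hpr hps, Equiv.swap_apply_of_ne_of_ne hqr hqs]) (by
      intro π
      simp only [ddY_swap r s hrs]
      have : ddY p q (π * Equiv.swap r s) = ddY p q π := by
        simp [ddY, Equiv.swap_apply_of_ne_of_ne hpr hps, Equiv.swap_apply_of_ne_of_ne hqr hqs]
      rw [this]; ring)
  simp only [true_and] at h0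
  rw [← Finset.sum_filter_add_sum_filter_not (derangementSet n) (fun π => π p = q ∨ π q = p), h0,
    add_zero, ← Finset.sum_filter_add_sum_filter_not _ (fun π => π r = s ∨ π s = r),
    Finset.filter_filter, Finset.filter_filter, h1, add_zero]
  refine (dd_bound _ _ (1/4) (fun π => ?_)).trans ?_
  · rw [abs_mul, ddY_abs, ddY_abs]; norm_num
  set S := fun i a j b : Fin n => univ.filter fun π : Equiv.Perm (Fin n) => π i = a ∧ π j = b
    with hS
  have : ((derangementSet n).filter
      (fun π => (π p = q ∨ π q = p) ∧ (π r = s ∨ π s = r))).card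
      ≤ (S p q r s).card + (S p q s r).card + ((S q p r s).card + (S q p s r).card) := by
    refine le_trans (Finset.card_le_card (t := (S p q r s ∪ S p q s r) ∪ (S q p r s ∪ S q p s r)) ?_)
      ((Finset.card_union_le _ _).trans
        (add_le_add (Finset.card_union_le _ _) (Finset.card_union_le _ _)))
    intro π h
    simp [hS] at h ⊢
    tauto
  have h' : (((derangementSet n).filter
      (fun π => (π p = q ∨ π q = p) ∧ (π r = s ∨ π s = r))).card : ℝ)
      ≤ (S p q r s).card + (S p q s r).card + ((S q p r s).card + (S q p s r).card) := by
    exact_mod_cast this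
  linarith [dd_c2 p r q s hpr, dd_c2 p s q r hps, dd_c2 q r p s hqr, dd_c2 q s p r hqs]

theorem dd_cyc {n : ℕ} (p q r : Fin n) (hpq : p ≠ q) (hqr : q ≠ r) (hpr : p ≠ r)
    (π : Equiv.Perm (Fin n)) :
    ddY p q π * ddY q r π + ddY q r π * ddY r p π + ddY r p π * ddY p q π = -1/4 := by
  have h1 : π p ≠ π q := fun e => hpq (π.injective e)
  have h2 : π q ≠ π r := fun e => hqr (π.injective e)
  have h3 : π p ≠ π r := fun e => hpr (π.injective e)
  unfold ddY
  split_ifs <;> first | (exfalso; omega) | norm_num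

theorem dd_L3 {n : ℕ} (p q r : Fin n) (hpq : p ≠ q) (hqr : q ≠ r) (hpr : p ≠ r) :
    |∑ π ∈ derangementSet n, ddY p q π * ddY q r π + (derangementSet n).card * (1/12)|
      ≤ 3 * (n.factorial / n) := by
  classical
  let T : Finset (Fin n) := {p, q, r}
  have hT : T.card ≤ 3 := Finset.card_le_three
  let P : Equiv.Perm (Fin n) → Prop := fun π => ∀ i ∈ T, π i ∉ T
  let τ : Equiv.Perm (Fin n) := Equiv.swap p q * Equiv.swap q r
  have tp : τ p = q := by
    simp [τ, Equiv.swap_apply_of_ne_of_ne hpq hpr]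
  have tq : τ q = r := by
    simp [τ, Equiv.swap_apply_of_ne_of_ne hpr.symm hqr.symm]
  have tr : τ r = p := by
    simp [τ]
  have tout : ∀ i, i ∉ T → τ i = i := by
    intro i hi
    simp [T] at hi
    simp [τ, Equiv.swap_apply_of_ne_of_ne hi.2.1 hi.2.2, Equiv.swap_apply_of_ne_of_ne hi.1 hi.2.1]
  have tT : ∀ i ∈ T, τ i ∈ T := by
    intro i hi
    simp [T] at hi
    rcases hi with h | h | h <;> subst h <;> simp [tp, tq, tr, T]
  let G := (derangementSet n).filter P
  have hG : ∀ π ∈ G, π * τ ∈ G := by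
    intro π h
    simp only [G, mem_filter, dd_mem] at h ⊢
    refine ⟨fun i => ?_, fun i hi => h.2 _ (tT i hi)⟩
    by_cases hi : i ∈ T
    · intro e
      exact h.2 _ (tT i hi) (by rw [Equiv.Perm.mul_apply] at e; rwa [e])
    · rw [Equiv.Perm.mul_apply, tout i hi]
      exact h.1 i
  have e1 := dd_inv G τ hG (fun π => ddY p q π * ddY q r π)
  have e2 := dd_inv G τ hG (fun π => ddY q r π * ddY r p π)
  have e3 : ∑ π ∈ G, (ddY p q π * ddY q r π + ddY q r π * ddY r p π + ddY r p π * ddY p q π)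
      = G.card * (-1/4) := by
    rw [Finset.sum_congr rfl (fun π _ => dd_cyc p q r hpq hqr hpr π)]
    simp
  rw [Finset.sum_add_distrib, Finset.sum_add_distrib] at e3
  simp only [ddY, Equiv.Perm.mul_apply, tp, tq, tr] at e1 e2 
  have e4 : ∑ π ∈ G, ddY p q π * ddY q r π = G.card * (-1/12) := by
    simp only [ddY] at e3 ⊢
    linarith
  let B := (derangementSet n).filter (fun π => ¬ P π)
  have hc : (derangementSet n).card = G.card + B.card :=
    (Finset.card_filter_add_card_filter_not (s := derangementSet n) P).symm
  have hs : ∑ π ∈ derangementSet n, ddY p q π * ddY q r π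
      = ∑ π ∈ G, ddY p q π * ddY q r π + ∑ π ∈ B, ddY p q π * ddY q r π :=
    (Finset.sum_filter_add_sum_filter_not (derangementSet n) P _).symm
  have hb := dd_bound B (fun π => ddY p q π * ddY q r π) (1/4) (fun π => by
    rw [abs_mul, ddY_abs, ddY_abs]; norm_num)
  have hB : B.card ≤ ∑ x ∈ T ×ˢ T,
      (univ.filter fun π : Equiv.Perm (Fin n) => π x.1 = x.2).card := by
    refine le_trans (Finset.card_le_card ?_) Finset.card_biUnion_le
    intro π h
    simp only [B, P, mem_filter, not_forall, not_not] at h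
    obtain ⟨_, i, hi, hi'⟩ := h
    rw [mem_biUnion]
    exact ⟨(i, π i), by simp [hi, hi'], by simp⟩
  have hB' : (B.card : ℝ) ≤ 9 * (n.factorial / n) := by
    have h1 : (B.card : ℝ) ≤ ∑ x ∈ T ×ˢ T,
      ((univ.filter fun π : Equiv.Perm (Fin n) => π x.1 = x.2).card : ℝ) := by exact_mod_cast hB
    refine h1.trans ((Finset.sum_le_sum (fun x _ => dd_c1 x.1 x.2)).trans ?_)
    rw [Finset.sum_const, nsmul_eq_mul, Finset.card_product]
    refine mul_le_mul_of_nonneg_right ?_ (by positivity)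
    exact_mod_cast Nat.mul_le_mul hT hT
  rw [hs, hc, e4]
  push_cast
  rw [abs_le] at hb ⊢
  constructor <;> linarith [hb.1, hb.2]

theorem dd_desc {m : ℕ} (π : Equiv.Perm (Fin (m+1))) :
    (descents π : ℝ) = ∑ i : Fin m, ddY i.castSucc i.succ π + m / 2 := by
  have h : descents π = (univ.filter fun i : Fin m => π i.succ < π i.castSucc).card := by
    unfold descents
    rw [← Finset.card_map (Fin.castSuccEmb (n := m))]
    congr 1
    ext i
    simp only [mem_filter, mem_univ, true_and, mem_map]
    constructor
    · rintro ⟨h, h'⟩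
      exact ⟨⟨i, by omega⟩, h', rfl⟩
    · rintro ⟨j, hj, rfl⟩
      exact ⟨by simp, hj⟩
  rw [h, Finset.card_filter]
  push_cast
  have : (m:ℝ)/2 = ∑ i : Fin m, (1/2:ℝ) := by simp; ring
  rw [this, ← Finset.sum_add_distrib]
  refine Finset.sum_congr rfl fun i _ => ?_
  unfold ddY
  split_ifs <;> norm_num

theorem dd_adj (m : ℕ) :
    ∑ i : Fin (m+1), ∑ j : Fin (m+1), (if (i:ℕ) + 1 = j then (1:ℝ) else 0) = m := by
  have : ∀ i : Fin (m+1), ∑ j : Fin (m+1), (if (i:ℕ) + 1 = j then (1:ℝ) else 0)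
      = if (i:ℕ) + 1 < m + 1 then 1 else 0 := by
    intro i
    rw [Fin.sum_univ_eq_sum_range (fun j => if (i:ℕ)+1 = j then (1:ℝ) else 0) (m+1),
      Finset.sum_ite_eq]
    simp
  rw [Finset.sum_congr rfl (fun i _ => this i),
    Fin.sum_univ_eq_sum_range (fun i => if i+1 < m+1 then (1:ℝ) else 0) (m+1),
    Finset.sum_range_succ, Finset.sum_congr rfl (g := fun _ => (1:ℝ))]
  · simp
  · intro i hi
    rw [Finset.mem_range] at hi
    rw [if_pos (by omega)]

theorem dd_diag (m : ℕ) :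
    ∑ i : Fin m, ∑ j : Fin m, (if i = j then (1:ℝ) else 0) = m := by
  simp

theorem dd_pair {m : ℕ} (i j : Fin m) :
    |∑ π ∈ derangementSet (m+1), ddY i.castSucc i.succ π * ddY j.castSucc j.succ π
      - (derangementSet (m+1)).card * ((1/4) * (if i = j then (1:ℝ) else 0)
        - (1/12) * (if (i:ℕ)+1 = j then (1:ℝ) else 0)
        - (1/12) * (if (j:ℕ)+1 = i then (1:ℝ) else 0))|
      ≤ ((m+1).factorial : ℝ) / ((m + 1) * m)
        + 3 * ((m+1).factorial / (m+1)) * (if (i:ℕ)+1 = j then (1:ℝ) else 0)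
        + 3 * ((m+1).factorial / (m+1)) * (if (j:ℕ)+1 = i then (1:ℝ) else 0) := by
  have hp : (0:ℝ) ≤ ((m+1).factorial : ℝ) / ((m + 1) * m) := by positivity
  by_cases h : i = j
  · subst h
    simp only [ddY_sq]
    simp
    exact hp
  have hne : (i:ℕ) ≠ j := fun e => h (Fin.ext e)
  by_cases h1 : (i:ℕ)+1 = j
  · have h2 : ¬ (j:ℕ)+1 = i := by omega
    have e : j.castSucc = i.succ := by ext; simp [h1]
    have := dd_L3 i.castSucc i.succ j.succ (by simp [Fin.ext_iff]) (by simp [Fin.ext_iff]; omega)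
      (by simp [Fin.ext_iff]; omega)
    push_cast at this
    rw [if_neg h, if_pos h1, if_neg h2, e]
    ring_nf at this ⊢
    ring_nf at hp
    linarith
  by_cases h2 : (j:ℕ)+1 = i
  · have e : i.castSucc = j.succ := by ext; simp [h2]
    have := dd_L3 j.castSucc j.succ i.succ (by simp [Fin.ext_iff]) (by simp [Fin.ext_iff]; omega)
      (by simp [Fin.ext_iff]; omega)
    push_cast at this
    rw [if_neg h, if_pos h2, if_neg h1, e,
      Finset.sum_congr rfl (fun π _ => mul_comm (ddY j.succ i.succ π) (ddY j.castSucc j.succ π))]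
    ring_nf at this ⊢
    ring_nf at hp
    linarith
  · have := dd_L2 i.castSucc i.succ j.castSucc j.succ (by simp [Fin.ext_iff])
      (by simp [Fin.ext_iff]) (by simp [Fin.ext_iff]; omega) (by simp [Fin.ext_iff]; omega)
      (by simp [Fin.ext_iff]; omega) (by simp [Fin.ext_iff]; omega)
    push_cast at this
    rw [if_neg h, if_neg h1, if_neg h2]
    simpa using this

theorem dd_second (k : ℕ) :
    |∑ π ∈ derangementSet (k+2), (∑ i : Fin (k+1), ddY i.castSucc i.succ π)^2
      - (derangementSet (k+2)).card * ((k+1)/4 - k/6 : ℝ)| ≤ 7 * (k+2).factorial := by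
  have e1 : ∑ π ∈ derangementSet (k+2), (∑ i : Fin (k+1), ddY i.castSucc i.succ π)^2
      = ∑ i : Fin (k+1), ∑ j : Fin (k+1), ∑ π ∈ derangementSet (k+2),
        ddY i.castSucc i.succ π * ddY j.castSucc j.succ π := by
    simp_rw [sq, Finset.sum_mul_sum]
    rw [Finset.sum_comm]
    refine Finset.sum_congr rfl fun i _ => ?_
    rw [Finset.sum_comm]
  have a1 := dd_adj k
  have a2 : ∑ i : Fin (k+1), ∑ j : Fin (k+1), (if (j:ℕ) + 1 = i then (1:ℝ) else 0) = k := by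
    rw [Finset.sum_comm]; exact a1
  have a3 := dd_diag (k+1)
  have e2 : (derangementSet (k+2)).card * ((k+1)/4 - k/6 : ℝ)
      = ∑ i : Fin (k+1), ∑ j : Fin (k+1), (derangementSet (k+2)).card *
        ((1/4) * (if i = j then (1:ℝ) else 0)
        - (1/12) * (if (i:ℕ)+1 = j then (1:ℝ) else 0)
        - (1/12) * (if (j:ℕ)+1 = i then (1:ℝ) else 0)) := by
    simp only [← Finset.mul_sum, Finset.sum_sub_distrib]
    rw [a1, a2, a3]
    push_cast
    ring
  rw [e1, e2, ← Finset.sum_sub_distrib]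
  simp_rw [← Finset.sum_sub_distrib]
  refine (Finset.abs_sum_le_sum_abs _ _).trans ?_
  refine (Finset.sum_le_sum fun i _ => (Finset.abs_sum_le_sum_abs _ _).trans
    (Finset.sum_le_sum fun j _ => dd_pair i j)).trans ?_
  simp only [Finset.sum_add_distrib, ← Finset.mul_sum]
  rw [a1, a2]
  simp only [Finset.sum_const, Finset.card_univ, Fintype.card_fin, nsmul_eq_mul]
  push_cast
  have hF : (0:ℝ) ≤ (k+2).factorial := by positivity
  have hk : (0:ℝ) ≤ k := by positivity
  have : (7:ℝ) * (k+2).factorial - (((k:ℝ)+1) * ((k+1) * ((k+1+1).factorial / ((k+1+1) * (k+1))))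
    + 3 * ((k+1+1).factorial / (k+1+1)) * k + 3 * ((k+1+1).factorial / (k+1+1)) * k)
    = (k+2).factorial * (13 / (k+2)) := by
    have : ((k:ℝ) + 1 + 1) = k + 2 := by ring
    rw [this]
    field_simp
    ring
  have h2 : (0:ℝ) ≤ (k+2).factorial * (13 / (k+2)) := by positivity
  linarith

theorem dd_first (k : ℕ) :
    |∑ π ∈ derangementSet (k+2), ∑ i : Fin (k+1), ddY i.castSucc i.succ π| ≤ (k+2).factorial := by
  rw [Finset.sum_comm]
  refine (Finset.abs_sum_le_sum_abs _ _).trans ?_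
  refine (Finset.sum_le_sum fun i _ => dd_L1 i.castSucc i.succ (by simp [Fin.ext_iff])).trans ?_
  simp only [Finset.sum_const, Finset.card_univ, Fintype.card_fin, nsmul_eq_mul]
  push_cast
  rw [mul_div_assoc', div_le_iff₀ (by positivity)]
  have hF : (0:ℝ) ≤ (k+2).factorial := by positivity
  have : (k+1+1).factorial = (k+2).factorial := rfl
  rw [this]
  nlinarith

theorem dd_card (n : ℕ) : (derangementSet n).card = numDerangements n := by
  rw [← card_derangements_fin_eq_numDerangements, Fintype.card_of_subtype]
  intro x
  rw [dd_mem]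
  rfl

theorem dd_var (k : ℕ) (hd : ((k+2).factorial : ℝ) ≤ 3 * (derangementSet (k+2)).card) :
    |derVar (k+2) - ((k+1)/4 - k/6 : ℝ)| ≤ 30 := by
  set d : ℝ := ((derangementSet (k+2)).card : ℝ) with hdd
  have hF : (0:ℝ) < (k+2).factorial := by positivity
  have hd0 : 0 < d := by linarith
  let S : Equiv.Perm (Fin (k+2)) → ℝ := fun π => ∑ i : Fin (k+1), ddY i.castSucc i.succ π
  have hS : ∀ π : Equiv.Perm (Fin (k+2)), (descents π : ℝ) = S π + (k+1)/2 := by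
    intro π
    have := dd_desc π
    push_cast at this
    exact this
  set A := ∑ π ∈ derangementSet (k+2), S π with hA
  set Q := ∑ π ∈ derangementSet (k+2), (S π)^2 with hQ
  have hm : derMean (k+2) = A / d + (k+1)/2 := by
    unfold derMean
    simp only [hS, Finset.sum_add_distrib, Finset.sum_const, nsmul_eq_mul, ← hdd, ← hA]
    field_simp
  have hv : derVar (k+2) = Q / d - (A/d)^2 := by
    unfold derVar
    rw [← hdd]
    have : ∀ π : Equiv.Perm (Fin (k+2)), ((descents π : ℝ) - derMean (k+2))^2
        = (S π)^2 - 2 * (A/d) * S π + (A/d)^2 := by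
      intro π; rw [hS, hm]; ring
    simp only [this, Finset.sum_add_distrib, Finset.sum_sub_distrib, ← Finset.mul_sum,
      Finset.sum_const, nsmul_eq_mul, ← hdd, ← hA, ← hQ]
    field_simp
    ring
  have h1 : |A| ≤ (k+2).factorial := dd_first k
  have h2 : |Q - d * ((k+1)/4 - k/6 : ℝ)| ≤ 7 * (k+2).factorial := dd_second k
  have h3 : |A / d| ≤ 3 := by
    rw [abs_div, abs_of_pos hd0, div_le_iff₀ hd0]; linarith
  have h4 : |Q / d - ((k+1)/4 - k/6 : ℝ)| ≤ 21 := by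
    have : Q / d - ((k+1)/4 - k/6 : ℝ) = (Q - d * ((k+1)/4 - k/6 : ℝ)) / d := by
      field_simp
    rw [this, abs_div, abs_of_pos hd0, div_le_iff₀ hd0]; linarith
  have h5 : (A/d)^2 ≤ 9 := by
    rw [← sq_abs]
    nlinarith [abs_nonneg (A/d)]
  have h6 := sq_nonneg (A/d)
  rw [hv]
  rw [abs_le] at h4 ⊢
  constructor <;> linarith [h4.1, h4.2]

theorem dd_ev : ∀ᶠ n : ℕ in Filter.atTop,
    (n.factorial : ℝ) ≤ 3 * (derangementSet n).card := by
  have h := numDerangements_tendsto_inv_e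
  have h3 : (1/3:ℝ) < Real.exp (-1) := by
    rw [Real.exp_neg, one_div]
    exact inv_strictAnti₀ (Real.exp_pos 1) (by linarith [Real.exp_one_lt_d9])
  filter_upwards [h.eventually (lt_mem_nhds h3)] with n hn
  have hF : (0:ℝ) < n.factorial := by positivity
  rw [lt_div_iff₀ hF] at hn
  rw [dd_card]
  linarith

/-- `Var(R_n)/n → 1/12` for the number of descents in random derangements. -/
theorem var_descents_derangements_tendsto :
    Filter.Tendsto (fun n : ℕ => derVar n / n) Filter.atTop (nhds (1 / 12)) := by
  rw [tendsto_iff_norm_sub_tendsto_zero]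
  have h0 : Filter.Tendsto (fun n : ℕ => (31:ℝ) / n) Filter.atTop (nhds 0) :=
    tendsto_const_div_atTop_nhds_zero_nat 31
  refine squeeze_zero' (Filter.Eventually.of_forall fun n => norm_nonneg _) ?_ h0
  filter_upwards [dd_ev, Filter.eventually_ge_atTop 2] with n hn h2
  obtain ⟨k, rfl⟩ := Nat.exists_eq_add_of_le' h2
  have := dd_var k hn
  have hk : (0:ℝ) < (k + 2 : ℕ) := by positivity
  have e : derVar (k+2) / ((k+2 : ℕ) : ℝ) - 1/12
      = (derVar (k+2) - ((k+1)/4 - k/6 : ℝ) + 1/12) / ((k+2 : ℕ) : ℝ) := by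
    push_cast
    field_simp
    ring
  rw [e, Real.norm_eq_abs, abs_div, abs_of_pos hk]
  gcongr
  rw [abs_le] at this ⊢
  constructor <;> linarith [this.1, this.2]
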